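/- arXiv:1405.4676 — 5 statements merged into one kernel-verified Lean document; each statement's English description precedes it below -/
import Mathlib

section
/- Let G be a graph on a finite vertex set ℐ (a symmetric, irreflexive adjacency relation), let L ⊆ ℐ and L₀ = ℐ \ L. Then χ̄_{L,L∪L₀} = Σ_{r=0}^{|L|} (−1)^r Σ* ∏_{s=1}^{r} χ_{L_s, L₀∪L₁∪⋯∪L_s}, where the inner sum Σ* runs over all ordered r-tuples (L₁,…,L_r) of pairwise disjoint nonempty subsets of L, and the r = 0 term is equal to 1. -/
/-!
For finite sets `A` (the base set) and `M` (the remaining one), let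
`T r A M` be the sum over `r`-tuples of disjoint nonempty subsets of `M`, with `A` in the role
of `L₀`. Splitting off the first block `B` of the tuple gives (`tupleSum_succ`)
`T (r + 1) A M = ∑_{∅ ≠ B ⊆ M} χ_{B, A ∪ B} T r (A ∪ B) (M \ B)`.
By induction on `|M|`, the alternating sum of the `T r A M` is therefore
`1 - ∑_{∅ ≠ B ⊆ M} χ_{B, A ∪ B} χ̄_{M \ B, A ∪ M}`, so everything reduces to
`∑_{B ⊆ M} χ_{B, A ∪ B} χ̄_{M \ B, A ∪ M} = 1` (`sum_chiProd_mul_chiBarProd`), the term `B = ∅`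
being `χ̄_{M, A ∪ M}`. In this sum exactly one term is nonzero, namely the one in which `B` is the
set of vertices of `M` that have a neighbour in `A ∪ M`: such a neighbour, if it is in `M`, lies in
`B` itself, because adjacency is symmetric.
-/

open scoped Classical

/-- The indicator `χ_{i,K}` that `i` has a neighbour in `K`. -/
noncomputable def chi {ι : Type*} [DecidableEq ι] (adj : ι → ι → Prop) (i : ι) (K : Finset ι) : ℝ :=
  if ∃ k ∈ K, adj i k then (1 : ℝ) else 0

/-- `T r A M`: the sum, over ordered `r`-tuples of pairwise disjoint nonempty subsets of `M`, of
`∏ s, χ_{L_s, A ∪ L_1 ∪ ⋯ ∪ L_s}`. -/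
noncomputable def tupleSum {ι : Type*} [Fintype ι] [DecidableEq ι] (adj : ι → ι → Prop) (r : ℕ)
    (A M : Finset ι) : ℝ :=
  ∑ Ls ∈ Finset.univ.filter (fun Ls : Fin r → Finset ι =>
      (∀ s, Ls s ⊆ M ∧ (Ls s).Nonempty) ∧ ∀ s s', s ≠ s' → Disjoint (Ls s) (Ls s')),
    ∏ s : Fin r, ∏ i ∈ Ls s, chi adj i (A ∪ (Finset.Iic s).biUnion Ls)

section
variable {ι : Type*} [DecidableEq ι] (adj : ι → ι → Prop)

lemma tupleSum_zero [Fintype ι] (A M : Finset ι) : tupleSum adj 0 A M = 1 := by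
  simp [tupleSum]

/-- Disjointness of the later blocks from the first block `B` is absorbed into the requirement that
they lie in `M \ B`. -/
lemma valid_cons_iff {r : ℕ} (M B : Finset ι) (Ls : Fin r → Finset ι) :
    ((∀ s, (Fin.cons B Ls : Fin (r + 1) → Finset ι) s ⊆ M ∧
        ((Fin.cons B Ls : Fin (r + 1) → Finset ι) s).Nonempty) ∧
      ∀ s s', s ≠ s' → Disjoint ((Fin.cons B Ls : Fin (r + 1) → Finset ι) s)
        ((Fin.cons B Ls : Fin (r + 1) → Finset ι) s')) ↔
    (B ∈ M.powerset.erase ∅) ∧ ((∀ s, Ls s ⊆ M \ B ∧ (Ls s).Nonempty) ∧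
      ∀ s s', s ≠ s' → Disjoint (Ls s) (Ls s')) := by
  simp only [Fin.forall_fin_succ, Fin.cons_zero, Fin.cons_succ, Finset.mem_erase,
    Finset.mem_powerset, Finset.subset_sdiff, Finset.nonempty_iff_ne_empty, ne_eq,
    Fin.succ_inj, Fin.succ_ne_zero, not_true_eq_false, false_imp_iff, not_false_eq_true,
    true_imp_iff, true_and, (Fin.succ_ne_zero _).symm]
  constructor
  · rintro ⟨⟨⟨h1, h2⟩, h3⟩, h4, h5⟩
    exact ⟨⟨h2, h1⟩, fun s => ⟨⟨(h3 s).1, (h5 s).1⟩, (h3 s).2⟩, fun s => (h5 s).2⟩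
  · rintro ⟨⟨h2, h1⟩, h3, h5⟩
    exact ⟨⟨⟨h1, h2⟩, fun s => ⟨(h3 s).1.1, (h3 s).2⟩⟩, fun s => (h3 s).1.2.symm,
      fun s => ⟨(h3 s).1.2, h5 s⟩⟩

lemma union_biUnion_Iic_succ {r : ℕ} (A B : Finset ι) (Ls : Fin r → Finset ι) (s : Fin r) :
    A ∪ (Finset.Iic s.succ).biUnion (Fin.cons B Ls : Fin (r + 1) → Finset ι) =
      (A ∪ B) ∪ (Finset.Iic s).biUnion Ls := by
  ext x
  simp [Fin.exists_fin_succ]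

lemma union_biUnion_Iic_zero {r : ℕ} (A B : Finset ι) (Ls : Fin r → Finset ι) :
    A ∪ (Finset.Iic 0).biUnion (Fin.cons B Ls : Fin (r + 1) → Finset ι) = A ∪ B := by
  ext x
  simp

/-- Recursion obtained by splitting off the first block of the tuple. -/
lemma tupleSum_succ [Fintype ι] (r : ℕ) (A M : Finset ι) :
    tupleSum adj (r + 1) A M =
      ∑ B ∈ M.powerset.erase ∅, (∏ i ∈ B, chi adj i (A ∪ B)) *
        tupleSum adj r (A ∪ B) (M \ B) := by
  have key : ∀ f : (Fin (r + 1) → Finset ι) → ℝ,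
      ∑ Ls, f Ls = ∑ B : Finset ι, ∑ Ls : Fin r → Finset ι, f (Fin.cons B Ls) := by
    intro f
    rw [← Fintype.sum_prod_type']
    exact (Fintype.sum_equiv (Fin.consEquiv (fun _ => Finset ι)) _ _ (fun _ => rfl)).symm
  rw [tupleSum, Finset.sum_filter, key]
  simp only [valid_cons_iff, Fin.prod_univ_succ, Fin.cons_zero, Fin.cons_succ,
    union_biUnion_Iic_succ, union_biUnion_Iic_zero]
  rw [← Finset.sum_subset (Finset.subset_univ (M.powerset.erase ∅))]
  · refine Finset.sum_congr rfl fun B hB => ?_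
    rw [tupleSum, Finset.mul_sum, Finset.sum_filter]
    refine Finset.sum_congr rfl fun Ls _ => ?_
    simp only [hB, true_and]
  · intro B _ hB
    simp only [hB, false_and, if_false, Finset.sum_const_zero]

/-- The sum has a single nonzero term, at the set of vertices of `M` with a neighbour in
`A ∪ M`. -/
lemma sum_chiProd_mul_chiBarProd (hsym : Symmetric adj) (A M : Finset ι) :
    ∑ B ∈ M.powerset, (∏ i ∈ B, chi adj i (A ∪ B)) *
      ∏ i ∈ M \ B, (1 - chi adj i (A ∪ M)) = 1 := by
  set B₀ := M.filter (fun i => ∃ k ∈ A ∪ M, adj i k) with hB₀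
  rw [Finset.sum_eq_single B₀]
  · rw [Finset.prod_eq_one, Finset.prod_eq_one, one_mul]
    · intro i hi
      have : ¬ ∃ k ∈ A ∪ M, adj i k := by
        simp only [hB₀, Finset.mem_sdiff, Finset.mem_filter] at hi
        exact fun h => hi.2 ⟨hi.1, h⟩
      rw [chi, if_neg this, sub_zero]
    · intro i hi
      obtain ⟨hiM, k, hk, hik⟩ := Finset.mem_filter.1 hi
      refine if_pos ⟨k, ?_, hik⟩
      rcases Finset.mem_union.1 hk with h | h
      · exact Finset.mem_union_left _ h
      -- `i` itself is a neighbour of `k`, so `k` belongs to `B₀`.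
      · exact Finset.mem_union_right _
          (Finset.mem_filter.2 ⟨h, i, Finset.mem_union_right _ hiM, hsym hik⟩)
  · intro B hB hne
    rw [Finset.mem_powerset] at hB
    by_contra hprod
    obtain ⟨h1, h2⟩ := mul_ne_zero_iff.1 hprod
    rw [Finset.prod_ne_zero_iff] at h1 h2
    refine hne (Finset.ext fun i => ?_)
    rw [hB₀, Finset.mem_filter]
    constructor
    · intro hi
      refine ⟨hB hi, ?_⟩
      by_contra hno
      refine h1 i hi (if_neg ?_)
      rintro ⟨k, hk, hik⟩
      exact hno ⟨k, Finset.union_subset_union_right hB hk, hik⟩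
    · rintro ⟨hi, hex⟩
      by_contra hiB
      refine h2 i (Finset.mem_sdiff.2 ⟨hi, hiB⟩) ?_
      rw [chi, if_pos hex, sub_self]
  · intro h
    exact absurd (Finset.mem_powerset.2 (Finset.filter_subset _ _)) h

/-- The expansion identity for an arbitrary base set `A`. The upper summation limit `n` may be any
bound for `|M|`, since the sets `M \ B` met in the induction step
have various sizes. -/
lemma sum_tupleSum [Fintype ι] (hsym : Symmetric adj) (n : ℕ) :
    ∀ A M : Finset ι, M.card ≤ n →
      ∑ r ∈ Finset.range (n + 1), (-1 : ℝ) ^ r * tupleSum adj r A M =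
        ∏ i ∈ M, (1 - chi adj i (A ∪ M)) := by
  induction n with
  | zero =>
    intro A M hM
    obtain rfl : M = ∅ := by simpa using hM
    simp [tupleSum_zero]
  | succ n ih =>
    intro A M hM
    have hstep : ∑ r ∈ Finset.range (n + 1), (-1 : ℝ) ^ (r + 1) * tupleSum adj (r + 1) A M =
        - ∑ B ∈ M.powerset.erase ∅, (∏ i ∈ B, chi adj i (A ∪ B)) *
          ∏ i ∈ M \ B, (1 - chi adj i (A ∪ M)) := by
      simp only [tupleSum_succ, Finset.mul_sum]
      rw [Finset.sum_comm, ← Finset.sum_neg_distrib]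
      refine Finset.sum_congr rfl fun B hB => ?_
      obtain ⟨hne, hBM⟩ := Finset.mem_erase.1 hB
      rw [Finset.mem_powerset] at hBM
      have hcard : (M \ B).card ≤ n := by
        have := Finset.card_sdiff_add_card_eq_card hBM
        have := Finset.card_pos.2 (Finset.nonempty_iff_ne_empty.2 hne)
        omega
      have hU : A ∪ B ∪ M \ B = A ∪ M := by
        rw [Finset.union_assoc, Finset.union_sdiff_of_subset hBM]
      have h := ih (A ∪ B) (M \ B) hcard
      rw [hU] at h
      rw [← h, Finset.mul_sum, ← Finset.sum_neg_distrib]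
      refine Finset.sum_congr rfl fun r _ => ?_
      ring
    have h1 := sum_chiProd_mul_chiBarProd adj hsym A M
    rw [← Finset.add_sum_erase _ _ (Finset.empty_mem_powerset M), Finset.prod_empty, one_mul,
      Finset.sdiff_empty] at h1
    rw [Finset.sum_range_succ', hstep, tupleSum_zero]
    linarith
end

/-- Graph expansion identity: for a graph (symmetric irreflexive relation) on a finite
vertex set, with `L₀ = ℐ \ L`, the indicator that no vertex of `L` is connected to any
vertex of `L ∪ L₀` expands as an alternating sum over ordered tuples of pairwise
disjoint nonempty subsets of `L`. -/
theorem graph_expansion_identity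
    {ι : Type*} [Fintype ι] [DecidableEq ι]
    (adj : ι → ι → Prop) (hsym : Symmetric adj) (hirr : Irreflexive adj)
    (L L₀ : Finset ι) (hL₀ : L₀ = Finset.univ \ L) :
    (∏ i ∈ L, (1 - (if ∃ k ∈ L ∪ L₀, adj i k then (1 : ℝ) else 0))) =
      ∑ r ∈ Finset.range (L.card + 1), (-1 : ℝ) ^ r *
        ∑ Ls ∈ Finset.univ.filter (fun Ls : Fin r → Finset ι =>
            (∀ s, Ls s ⊆ L ∧ (Ls s).Nonempty) ∧
            ∀ s s', s ≠ s' → Disjoint (Ls s) (Ls s')),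
          ∏ s : Fin r, ∏ i ∈ Ls s,
            (if ∃ k ∈ L₀ ∪ (Finset.Iic s).biUnion Ls, adj i k then (1 : ℝ) else 0) := by
  have h := sum_tupleSum adj hsym L.card L₀ L le_rfl
  rw [Finset.union_comm L₀ L] at h
  exact h.symm
end

section
/- Let K be a finite set, a : K → ℝ, and f : 𝒫(K) → ℝ with f_∅ = 1. Define E : 𝒫(K) → ℝ by E_M = Σ_{L⊆M} (−1)^{|L|} a^L f_{M\L}. Then for every S ⊆ K one has the identity Σ_{L⊆S} (−1)^{|L|} a^L f_{K\L} = Σ_{L⊆K\S} a^L E_{K\L}. -/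
/-!
Writing `M = S ∪ T` for disjoint `S`, `T` with `M ⊆ K`, the claim is that
`G S M = ∑ L ⊆ S, (-1)^|L| a^L f (M \ L)` equals `∑ L ⊆ T, a^L E (M \ L)`; the theorem is the case
`M = K`. Induct on `T`, for all `S` at once. For `T = ∅` this is the definition of `E`. To add an
element `x` to `T`, split the right-hand sum according to whether `x ∈ L`. By the induction
hypothesis it becomes `G (insert x S) (insert x M) + a x * G S M`, and splitting the first term in
the same way gives
`G (insert x S) (insert x M) = G S (insert x M) - a x * G S M`, so the terms in `a x` cancel.
-/

/-- Removing `insert x L` from `insert x M` is removing `L` from `M`, and `x` contributes one factor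
`c x`: the part of a sum over subsets of `insert x U` coming from the subsets that contain `x`. -/
lemma sum_powerset_insert_sdiff {ι : Type*} [DecidableEq ι] (c : ι → ℝ) (g : Finset ι → ℝ)
    {x : ι} {U M : Finset ι} (hU : x ∉ U) (hM : x ∉ M) :
    ∑ L ∈ (insert x U).powerset, (∏ i ∈ L, c i) * g (insert x M \ L)
      = ∑ L ∈ U.powerset, (∏ i ∈ L, c i) * g (insert x M \ L)
        + c x * ∑ L ∈ U.powerset, (∏ i ∈ L, c i) * g (M \ L) := by
  rw [Finset.sum_powerset_insert hU, Finset.mul_sum]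
  congr 1
  refine Finset.sum_congr rfl fun L hL => ?_
  have hx : x ∉ L := fun h => hU (Finset.mem_powerset.1 hL h)
  have hs : insert x M \ insert x L = M \ L := by
    ext y
    simp only [Finset.mem_sdiff, Finset.mem_insert]
    grind
  rw [Finset.prod_insert hx, hs, mul_assoc]

/-- The identity for an arbitrary ground set `S ∪ T ⊆ K`, with the sign `(-1)^|L|` absorbed into the
product of the `-a i`. -/
lemma partial_inversion_aux {ι : Type*} [DecidableEq ι] (K : Finset ι)
    (a : ι → ℝ) (f E : Finset ι → ℝ)
    (hE : ∀ M ⊆ K, E M = ∑ L ∈ M.powerset, (∏ i ∈ L, -a i) * f (M \ L)) (T : Finset ι) :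
    ∀ S, Disjoint S T → S ∪ T ⊆ K →
      ∑ L ∈ S.powerset, (∏ i ∈ L, -a i) * f ((S ∪ T) \ L)
        = ∑ L ∈ T.powerset, (∏ i ∈ L, a i) * E ((S ∪ T) \ L) := by
  induction T using Finset.induction_on with
  | empty =>
    intro S _ hS
    simpa using (hE S (by simpa using hS)).symm
  | insert x T hxT ih =>
    intro S hd hS
    rw [Finset.disjoint_insert_right] at hd
    obtain ⟨hxS, hd⟩ := hd
    rw [Finset.union_insert] at hS ⊢
    have hxM : x ∉ S ∪ T := by simp [hxS, hxT]
    have h1 := ih S hd ((Finset.subset_insert _ _).trans hS)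
    have h2 := ih (insert x S) (Finset.disjoint_insert_left.2 ⟨hxT, hd⟩)
      (by rwa [Finset.insert_union])
    rw [Finset.insert_union, sum_powerset_insert_sdiff (fun i => -a i) f hxS hxM] at h2
    rw [sum_powerset_insert_sdiff a E hxT hxM, ← h1, ← h2]
    ring


/-- For the cumulant-type inversion `E_M = Σ_{L⊆M} (−1)^{|L|} a^L f_{M\L}` of a set
function `f` with `f ∅ = 1`, one has, for every `S ⊆ K`,
`Σ_{L⊆S} (−1)^{|L|} a^L f_{K\L} = Σ_{L⊆K\S} a^L E_{K\L}`. -/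
theorem cumulant_partial_inversion {ι : Type*} [DecidableEq ι] (K : Finset ι)
    (a : ι → ℝ) (f : Finset ι → ℝ) (hf : f ∅ = 1)
    (E : Finset ι → ℝ)
    (hE : ∀ M ⊆ K, E M = ∑ L ∈ M.powerset,
        (-1 : ℝ) ^ L.card * (∏ i ∈ L, a i) * f (M \ L)) :
    ∀ S ⊆ K,
      ∑ L ∈ S.powerset, (-1 : ℝ) ^ L.card * (∏ i ∈ L, a i) * f (K \ L)
        = ∑ L ∈ (K \ S).powerset, (∏ i ∈ L, a i) * E (K \ L) := by
  intro S hS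
  have h := partial_inversion_aux K a f E
    (fun M hM => by simpa only [Finset.prod_neg] using hE M hM) (K \ S) S
    Finset.disjoint_sdiff (Finset.union_sdiff_of_subset hS).subset
  simpa only [Finset.union_sdiff_of_subset hS, Finset.prod_neg] using h
end

section
/- Let J be a finite set and f : 𝒫(J) → ℝ with f_∅ = 1. Suppose fᵀ, defined on the nonempty subsets of J, satisfies for every nonempty S ⊆ J the partition expansion f_S = Σ_{π} ∏_{B∈π} fᵀ_B, where π ranges over all partitions of S into nonempty blocks. Define E : 𝒫(J) → ℝ by E_S = Σ_{K⊆S} (−1)^{|K|} (∏_{i∈K} f_{{i}}) f_{S\K}. Then for every S ⊆ J, E_S = Σ_{π'} ∏_{B∈π'} fᵀ_B, where π' ranges over all partitions of S into blocks each of cardinality at least 2 (in particular E_S = 0 whenever |S| = 1, and E_∅ = 1, the empty partition contributing the empty product 1). -/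
/-!
Inclusion–exclusion over singleton blocks. For `K ⊆ S`, adjoining the singletons `{i}`, `i ∈ K`, is
a bijection from the partitions of `S \ K` onto the partitions of `S` that contain all these
singletons, so `(∏_{i∈K} fᵀ_{{i}}) f_{S\K}` is the sum of `∏_{B∈π} fᵀ_B` over the latter
(`prod_mul_sum_setPartitions`). Inserting this in `E_S` and exchanging the sums, the coefficient of
a partition `π` becomes the sum of `(-1)^|K|` over all subsets `K` of the set of `i` with `{i} ∈ π`.
It is `1` if `π` has no singleton block and `0` otherwise.
-/

open scoped Classical

/-- The partitions of `S` into nonempty blocks, each encoded as its set of blocks. -/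
noncomputable def setPartitions {ι : Type*} [Fintype ι] [DecidableEq ι] (S : Finset ι) :
    Finset (Finset (Finset ι)) :=
  Finset.univ.filter (fun π : Finset (Finset ι) =>
    (∀ B ∈ π, B.Nonempty) ∧
    (∀ B ∈ π, ∀ B' ∈ π, B ≠ B' → Disjoint B B') ∧ π.sup id = S)

/-- Elementwise form of the defining conditions: two blocks with a common element are equal, and
the elements of `S` are exactly those lying in some block. -/
lemma mem_setPartitions {ι : Type*} [Fintype ι] [DecidableEq ι] {S : Finset ι}
    {π : Finset (Finset ι)} :
    π ∈ setPartitions S ↔ (∀ B ∈ π, B.Nonempty) ∧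
      (∀ B ∈ π, ∀ B' ∈ π, ∀ x, x ∈ B → x ∈ B' → B = B') ∧
      ∀ x, x ∈ S ↔ ∃ B ∈ π, x ∈ B := by
  simp only [setPartitions, Finset.mem_filter, Finset.mem_univ, true_and]
  refine and_congr_right fun _ => and_congr ?_ ?_
  · refine forall₂_congr fun B _ => forall₂_congr fun B' _ => ?_
    rw [Finset.disjoint_left]
    constructor
    · intro h x hx hx'
      by_contra hne
      exact h hne hx hx'
    · intro h hne x hx hx'
      exact hne (h x hx hx')
  · rw [Finset.ext_iff]
    refine forall_congr' fun x => ?_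
    rw [Finset.mem_sup]
    simp only [id]
    exact Iff.comm

lemma setPartitions_empty {ι : Type*} [Fintype ι] [DecidableEq ι] :
    setPartitions (∅ : Finset ι) = {∅} := by
  ext π
  rw [mem_setPartitions, Finset.mem_singleton]
  constructor
  · rintro ⟨h1, -, h3⟩
    refine Finset.eq_empty_of_forall_notMem fun B hB => ?_
    obtain ⟨x, hx⟩ := h1 B hB
    exact Finset.notMem_empty x ((h3 x).2 ⟨B, hB, hx⟩)
  · rintro rfl
    simp

lemma setPartitions_singleton {ι : Type*} [Fintype ι] [DecidableEq ι] (i : ι) :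
    setPartitions ({i} : Finset ι) = {{{i}}} := by
  ext π
  rw [mem_setPartitions, Finset.mem_singleton]
  constructor
  · rintro ⟨h1, -, h3⟩
    have key : ∀ B ∈ π, B = {i} := fun B hB =>
      Finset.eq_singleton_iff_nonempty_unique_mem.2
        ⟨h1 B hB, fun x hx => Finset.mem_singleton.1 ((h3 x).2 ⟨B, hB, hx⟩)⟩
    obtain ⟨B, hB, -⟩ := (h3 i).1 (Finset.mem_singleton_self i)
    exact Finset.eq_singleton_iff_nonempty_unique_mem.2 ⟨⟨B, hB⟩, key⟩
  · rintro rfl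
    simp

lemma prod_mul_sum_setPartitions {ι : Type*} [Fintype ι] [DecidableEq ι] (fT : Finset ι → ℝ)
    {S K : Finset ι} (hK : K ⊆ S) :
    (∏ i ∈ K, fT {i}) * ∑ σ ∈ setPartitions (S \ K), ∏ B ∈ σ, fT B =
      ∑ π ∈ setPartitions S with ∀ i ∈ K, {i} ∈ π, ∏ B ∈ π, fT B := by
  have hmem : ∀ B : Finset ι, B ∈ K.image (fun i => ({i} : Finset ι)) ↔ ∃ i ∈ K, {i} = B := by
    simp
  -- No block of a partition of `S \ K` is one of the adjoined singletons.
  have hdisj : ∀ σ ∈ setPartitions (S \ K),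
      Disjoint σ (K.image (fun i => ({i} : Finset ι))) := by
    intro σ hσ
    obtain ⟨-, -, h3⟩ := mem_setPartitions.1 hσ
    rw [Finset.disjoint_left]
    intro B hB hB'
    obtain ⟨i, hi, rfl⟩ := (hmem B).1 hB'
    exact (Finset.mem_sdiff.1 ((h3 i).2 ⟨_, hB, Finset.mem_singleton_self i⟩)).2 hi
  rw [Finset.mul_sum]
  refine Finset.sum_bij' (fun σ _ => σ ∪ K.image (fun i => ({i} : Finset ι)))
    (fun π _ => π \ K.image (fun i => ({i} : Finset ι))) ?_ ?_ ?_ ?_ ?_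
  · intro σ hσ
    obtain ⟨h1, h2, h3⟩ := mem_setPartitions.1 hσ
    rw [Finset.mem_filter, mem_setPartitions]
    simp only [Finset.mem_union, hmem]
    have hn : ∀ B ∈ σ, ∀ x ∈ B, x ∈ S ∧ x ∉ K := fun B hB x hx =>
      Finset.mem_sdiff.1 ((h3 x).2 ⟨B, hB, hx⟩)
    refine ⟨⟨?_, ?_, fun x => ⟨fun hx => ?_, ?_⟩⟩, fun i hi => Or.inr ⟨i, hi, rfl⟩⟩
    · rintro B (hB | ⟨i, -, rfl⟩)
      · exact h1 B hB
      · exact Finset.singleton_nonempty i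
    · rintro B (hB | ⟨i, hi, rfl⟩) B' (hB' | ⟨j, hj, rfl⟩) x hx hx'
      · exact h2 B hB B' hB' x hx hx'
      · rw [Finset.mem_singleton] at hx'
        subst hx'
        exact absurd hj (hn B hB x hx).2
      · rw [Finset.mem_singleton] at hx
        subst hx
        exact absurd hi (hn B' hB' x hx').2
      · rw [Finset.mem_singleton] at hx hx'
        rw [← hx, ← hx']
    · by_cases hxK : x ∈ K
      · exact ⟨{x}, Or.inr ⟨x, hxK, rfl⟩, Finset.mem_singleton_self x⟩
      · obtain ⟨B, hB, hxB⟩ := (h3 x).1 (Finset.mem_sdiff.2 ⟨hx, hxK⟩)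
        exact ⟨B, Or.inl hB, hxB⟩
    · rintro ⟨B, hB | ⟨i, hi, rfl⟩, hx⟩
      · exact (hn B hB x hx).1
      · rw [Finset.mem_singleton] at hx
        exact hx ▸ hK hi
  · intro π hπ
    obtain ⟨hπ, hs⟩ := Finset.mem_filter.1 hπ
    obtain ⟨h1, h2, h3⟩ := mem_setPartitions.1 hπ
    rw [mem_setPartitions]
    simp only [Finset.mem_sdiff, hmem]
    refine ⟨fun B hB => h1 B hB.1, fun B hB B' hB' => h2 B hB.1 B' hB'.1,
      fun x => ⟨?_, ?_⟩⟩
    · rintro ⟨hxS, hxK⟩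
      obtain ⟨B, hB, hx⟩ := (h3 x).1 hxS
      refine ⟨B, ⟨hB, ?_⟩, hx⟩
      rintro ⟨i, hi, rfl⟩
      exact hxK (Finset.mem_singleton.1 hx ▸ hi)
    · rintro ⟨B, ⟨hB, hB'⟩, hx⟩
      exact ⟨(h3 x).2 ⟨B, hB, hx⟩, fun hxK =>
        hB' ⟨x, hxK, h2 _ (hs x hxK) B hB x (Finset.mem_singleton_self x) hx⟩⟩
  · intro σ hσ
    exact Finset.union_sdiff_cancel_right (hdisj σ hσ)
  · intro π hπ
    refine Finset.sdiff_union_of_subset fun B hB => ?_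
    obtain ⟨i, hi, rfl⟩ := (hmem B).1 hB
    exact (Finset.mem_filter.1 hπ).2 i hi
  · intro σ hσ
    rw [Finset.prod_union (hdisj σ hσ),
      Finset.prod_image fun i _ j _ h => Finset.singleton_injective h, mul_comm]

/-- Alternating sum over the sets `K` of singleton blocks of `π`: it detects the partitions all of
whose blocks have at least two elements. -/
lemma sum_neg_one_pow_singletons {ι : Type*} [Fintype ι] [DecidableEq ι] {S : Finset ι}
    {π : Finset (Finset ι)} (hπ : π ∈ setPartitions S) :
    (∑ K ∈ S.powerset with ∀ i ∈ K, {i} ∈ π, (-1 : ℝ) ^ K.card) =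
      if ∀ B ∈ π, 2 ≤ B.card then 1 else 0 := by
  obtain ⟨h1, -, h3⟩ := mem_setPartitions.1 hπ
  have hset : (S.powerset.filter fun K => ∀ i ∈ K, {i} ∈ π) =
      (S.filter fun i => {i} ∈ π).powerset := by
    ext K
    simp only [Finset.mem_filter, Finset.mem_powerset, Finset.subset_iff]
    exact ⟨fun h i hi => ⟨h.1 hi, h.2 i hi⟩, fun h => ⟨fun i hi => (h hi).1, fun i hi => (h hi).2⟩⟩
  have hsum : ∀ T : Finset ι, (∑ K ∈ T.powerset, (-1 : ℝ) ^ K.card) = if T = ∅ then 1 else 0 := by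
    intro T
    exact_mod_cast congrArg (Int.cast : ℤ → ℝ) (Finset.sum_powerset_neg_one_pow_card (x := T))
  rw [hset, hsum]
  refine if_congr ?_ rfl rfl
  rw [Finset.filter_eq_empty_iff]
  constructor
  · intro h B hB
    by_contra hlt
    have hpos := Finset.card_pos.2 (h1 B hB)
    obtain ⟨i, rfl⟩ := Finset.card_eq_one.1 (by omega : B.card = 1)
    exact h ((h3 i).2 ⟨_, hB, Finset.mem_singleton_self i⟩) hB
  · intro h i _ hi
    simpa using h _ hi

/-- If a set function `f` (with `f ∅ = 1`) has a partition expansion in terms of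
truncated functions `fᵀ`, i.e. `f_S = Σ_π ∏_{B∈π} fᵀ_B` over all partitions `π` of `S`
into nonempty blocks, then the correlation error
`E_S = Σ_{K⊆S} (−1)^{|K|} (∏_{i∈K} f_{{i}}) f_{S\K}` is given by the same expansion
restricted to partitions all of whose blocks have cardinality at least 2. -/
theorem correlation_error_partition_expansion
    {ι : Type*} [Fintype ι] [DecidableEq ι] (J : Finset ι)
    (f fT : Finset ι → ℝ) (hf : f ∅ = 1)
    (hexp : ∀ S ⊆ J, S.Nonempty →
      f S = ∑ π ∈ Finset.univ.filter (fun π : Finset (Finset ι) =>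
          (∀ B ∈ π, B.Nonempty) ∧
          (∀ B ∈ π, ∀ B' ∈ π, B ≠ B' → Disjoint B B') ∧ π.sup id = S),
        ∏ B ∈ π, fT B) :
    ∀ S ⊆ J,
      (∑ K ∈ S.powerset, (-1 : ℝ) ^ K.card * (∏ i ∈ K, f {i}) * f (S \ K)) =
      ∑ π ∈ Finset.univ.filter (fun π : Finset (Finset ι) =>
          (∀ B ∈ π, 2 ≤ B.card) ∧
          (∀ B ∈ π, ∀ B' ∈ π, B ≠ B' → Disjoint B B') ∧ π.sup id = S),
        ∏ B ∈ π, fT B := by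
  intro S hS
  have hpart : ∀ T ⊆ J, f T = ∑ π ∈ setPartitions T, ∏ B ∈ π, fT B := by
    intro T hT
    rcases T.eq_empty_or_nonempty with rfl | hne
    · simp [setPartitions_empty, hf]
    · exact hexp T hT hne
  have hsing : ∀ i ∈ J, f {i} = fT {i} := by
    intro i hi
    rw [hpart _ (Finset.singleton_subset_iff.2 hi), setPartitions_singleton]
    simp
  calc
    _ = ∑ K ∈ S.powerset, ∑ π ∈ setPartitions S,
          if ∀ i ∈ K, {i} ∈ π then (-1 : ℝ) ^ K.card * ∏ B ∈ π, fT B else 0 := by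
      refine Finset.sum_congr rfl fun K hK => ?_
      rw [Finset.mem_powerset] at hK
      rw [Finset.prod_congr rfl fun i hi => hsing i (hS (hK hi)),
        hpart _ (Finset.sdiff_subset.trans hS), mul_assoc, prod_mul_sum_setPartitions fT hK,
        Finset.mul_sum, Finset.sum_filter]
    _ = ∑ π ∈ setPartitions S, if ∀ B ∈ π, 2 ≤ B.card then ∏ B ∈ π, fT B else 0 := by
      rw [Finset.sum_comm]
      refine Finset.sum_congr rfl fun π hπ => ?_
      rw [← Finset.sum_filter, ← Finset.sum_mul, sum_neg_one_pow_singletons hπ, ite_mul, one_mul,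
        zero_mul]
    _ = _ := by
      rw [← Finset.sum_filter]
      refine Finset.sum_congr ?_ fun _ _ => rfl
      ext π
      simp only [setPartitions, Finset.mem_filter, Finset.mem_univ, true_and]
      refine ⟨fun h => ⟨h.2, h.1.2⟩, fun h => ⟨⟨fun B hB => ?_, h.2⟩, h.1⟩⟩
      exact Finset.card_pos.1 (zero_lt_two.trans_le (h.1 B hB))
end

section
/- Let K be a finite set partitioned into pairwise disjoint nonempty blocks S₁,…,S_j (j ≥ 1, S₁ ∪ ⋯ ∪ S_j = K). Let a : K → ℝ, let f : 𝒫(K) → ℝ with f_∅ = 1, and define E_M = Σ_{L⊆M} (−1)^{|L|} a^L f_{M\L} for M ⊆ K. Then Σ_{𝒬⊆{1,…,j}} (−1)^{|𝒬|} (∏_{i∈𝒬} f_{S_i}) · f_{K \ ∪_{i∈𝒬} S_i} = Σ_{L} a^{K\L} Σ_{𝒬⊆{1,…,j}} (−1)^{|𝒬|} E_{L ∩ (K \ ∪_{i∈𝒬} S_i)} ∏_{i∈𝒬} E_{L ∩ S_i}, where the outer sum on the right-hand side runs only over those L ⊆ K with L ∩ S_i ≠ ∅ for every i ∈ {1,…,j}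 (the contributions of all other L ⊆ K vanish). -/
open scoped Classical

/-!
Write `a^L = ∏ i ∈ L, a i`. The relation defining `E` inverts to
`f M = ∑ L ⊆ M, a^(M \ L) * E L` (`cumulant_inversion`), because the coefficient of `f T` after
substitution is `∏ i ∈ M \ T, (a i - a i)`, which is zero unless `T = M`. For each `Q`, inserting
this expansion into `(∏ i ∈ Q, f (S i)) * f (K \ ⋃ i ∈ Q, S i)` and multiplying out gives one sum
over `L ⊆ K`, since a subset of a disjoint union is the same thing as a choice of a subset of each
part (`sum_powerset_union`, `prod_sum_powerset`), and the powers of `a` recombine to `a^(K \ L)`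
(`cluster_expansion`).

It remains to see that a set `L` missing some block `S i₀` contributes zero
(`alternating_sum_eq_zero`): adding `i₀` to `Q` flips the sign and changes nothing else, because
`L ∩ S i₀ = ∅` and `E ∅ = 1`.
-/

/-- The cumulant-type inversion can be inverted: `f` is recovered from `E` with all signs
positive. -/
lemma cumulant_inversion {ι : Type*} [DecidableEq ι] (a : ι → ℝ) (f E : Finset ι → ℝ)
    (M : Finset ι)
    (hE : ∀ L ⊆ M, E L = ∑ N ∈ L.powerset,
        (-1 : ℝ) ^ N.card * (∏ i ∈ N, a i) * f (L \ N)) :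
    f M = ∑ L ∈ M.powerset, (∏ i ∈ M \ L, a i) * E L := by
  -- The triple decomposition `M = T ⊔ N ⊔ (M \ L)` with `L = T ∪ N` is resummed over `T` first.
  have h1 : ∑ L ∈ M.powerset, (∏ i ∈ M \ L, a i) * E L
      = ∑ T ∈ M.powerset, f T * ∏ i ∈ M \ T, (-a i + a i) := by
    simp_rw [Finset.prod_add, Finset.mul_sum]
    rw [Finset.sum_congr rfl fun L hL => by
      rw [hE L (Finset.mem_powerset.1 hL), Finset.mul_sum]]
    rw [Finset.sum_sigma', Finset.sum_sigma']
    refine Finset.sum_bij' (fun x _ => ⟨x.1 \ x.2, x.2⟩) (fun x _ => ⟨x.1 ∪ x.2, x.2⟩)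
      ?_ ?_ ?_ ?_ ?_
    · rintro ⟨L, N⟩ h
      simp only [Finset.mem_sigma, Finset.mem_powerset] at h ⊢
      grind
    · rintro ⟨T, N⟩ h
      simp only [Finset.mem_sigma, Finset.mem_powerset] at h ⊢
      grind
    · rintro ⟨L, N⟩ h
      simp only [Finset.mem_sigma, Finset.mem_powerset] at h
      have : L \ N ∪ N = L := Finset.sdiff_union_of_subset h.2
      simp [this]
    · rintro ⟨T, N⟩ h
      simp only [Finset.mem_sigma, Finset.mem_powerset] at h
      have : (T ∪ N) \ N = T := by grind
      simp [this]
    · rintro ⟨L, N⟩ h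
      simp only [Finset.mem_sigma, Finset.mem_powerset] at h
      have : (M \ (L \ N)) \ N = M \ L := by grind
      simp only [this, Finset.prod_neg]
      ring
  rw [h1, Finset.sum_eq_single M]
  · simp
  · intro T hT hne
    obtain ⟨i, hi⟩ : (M \ T).Nonempty := by
      rw [Finset.sdiff_nonempty]
      exact fun h => hne (Finset.Subset.antisymm (Finset.mem_powerset.1 hT) h)
    rw [Finset.prod_eq_zero hi (by ring), mul_zero]
  · simp

lemma sum_powerset_union {ι : Type*} [DecidableEq ι] {A B : Finset ι} (h : Disjoint A B)
    (F G : Finset ι → ℝ) :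
    (∑ X ∈ A.powerset, F X) * ∑ Y ∈ B.powerset, G Y
      = ∑ L ∈ (A ∪ B).powerset, F (L ∩ A) * G (L ∩ B) := by
  rw [Finset.sum_mul_sum, ← Finset.sum_product']
  have hd := Finset.disjoint_left.1 h
  symm
  refine Finset.sum_bij' (fun L _ => (L ∩ A, L ∩ B)) (fun x _ => x.1 ∪ x.2) ?_ ?_ ?_ ?_ ?_
  · intro L _
    simp
  · rintro ⟨X, Y⟩ hx
    simp only [Finset.mem_product, Finset.mem_powerset] at hx ⊢
    exact Finset.union_subset_union hx.1 hx.2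
  · intro L hL
    simp only [Finset.mem_powerset] at hL
    grind
  · rintro ⟨X, Y⟩ hx
    simp only [Finset.mem_product, Finset.mem_powerset] at hx
    ext x <;> grind
  · intro L _
    rfl

lemma prod_sum_powerset {ι κ : Type*} [DecidableEq ι] [DecidableEq κ] (S : κ → Finset ι)
    (hS : ∀ i i', i ≠ i' → Disjoint (S i) (S i')) (g : κ → Finset ι → ℝ) (Q : Finset κ) :
    ∏ i ∈ Q, ∑ X ∈ (S i).powerset, g i X
      = ∑ L ∈ (Q.biUnion S).powerset, ∏ i ∈ Q, g i (L ∩ S i) := by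
  induction Q using Finset.induction_on with
  | empty => simp
  | insert i Q hi ih =>
    have hd : Disjoint (S i) (Q.biUnion S) := by
      rw [Finset.disjoint_biUnion_right]
      exact fun k hk => hS i k fun h => hi (h ▸ hk)
    rw [Finset.prod_insert hi, ih, sum_powerset_union hd, Finset.biUnion_insert]
    refine Finset.sum_congr rfl fun L _ => ?_
    rw [Finset.prod_insert hi]
    congr 1
    refine Finset.prod_congr rfl fun k hk => ?_
    rw [Finset.inter_assoc, Finset.inter_eq_right.2 (Finset.subset_biUnion_of_mem S hk)]

/-- The contribution of a fixed `Q` to the left-hand side, up to its sign, expanded in terms of `E`. -/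
lemma cluster_expansion {ι κ : Type*} [DecidableEq ι] [DecidableEq κ] (S : κ → Finset ι)
    (hS : ∀ i i', i ≠ i' → Disjoint (S i) (S i')) (K : Finset ι) (Q : Finset κ)
    (hQ : Q.biUnion S ⊆ K) (a : ι → ℝ) (f E : Finset ι → ℝ)
    (hf : ∀ M ⊆ K, f M = ∑ L ∈ M.powerset, (∏ i ∈ M \ L, a i) * E L) :
    (∏ i ∈ Q, f (S i)) * f (K \ Q.biUnion S)
      = ∑ L ∈ K.powerset, (∏ i ∈ K \ L, a i) *
          (E (L ∩ (K \ Q.biUnion S)) * ∏ i ∈ Q, E (L ∩ S i)) := by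
  have hsub : ∀ i ∈ Q, S i ⊆ Q.biUnion S := fun i hi => Finset.subset_biUnion_of_mem S hi
  rw [Finset.prod_congr rfl fun i hi => hf (S i) ((hsub i hi).trans hQ),
    prod_sum_powerset S hS (fun i L => (∏ x ∈ S i \ L, a x) * E L),
    hf _ Finset.sdiff_subset, sum_powerset_union Finset.disjoint_sdiff,
    Finset.union_sdiff_of_subset hQ]
  refine Finset.sum_congr rfl fun L _ => ?_
  have hE : ∀ i ∈ Q, (L ∩ Q.biUnion S) ∩ S i = L ∩ S i := fun i hi => by
    rw [Finset.inter_assoc, Finset.inter_eq_right.2 (hsub i hi)]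
  have hprod : ∏ i ∈ Q, ((∏ x ∈ S i \ ((L ∩ Q.biUnion S) ∩ S i), a x) *
        E ((L ∩ Q.biUnion S) ∩ S i))
      = (∏ x ∈ Q.biUnion S \ L, a x) * ∏ i ∈ Q, E (L ∩ S i) := by
    have hU : Q.biUnion S \ L = Q.biUnion fun i => S i \ L := by
      ext x
      simp only [Finset.mem_sdiff, Finset.mem_biUnion]
      grind
    rw [Finset.prod_mul_distrib, hU, Finset.prod_biUnion fun i _ k _ hik =>
      (hS i k hik).mono Finset.sdiff_subset Finset.sdiff_subset]
    congr 1
    · refine Finset.prod_congr rfl fun i hi => ?_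
      rw [hE i hi, Finset.sdiff_inter_self_right]
    · exact Finset.prod_congr rfl fun i hi => by rw [hE i hi]
  have hK : K \ L = (Q.biUnion S \ L) ∪ ((K \ Q.biUnion S) \ L) := by
    rw [← Finset.union_sdiff_distrib, Finset.union_sdiff_of_subset hQ]
  rw [hprod, hK, Finset.prod_union
    (Finset.disjoint_sdiff.mono Finset.sdiff_subset Finset.sdiff_subset),
    Finset.sdiff_inter_self_right]
  ring

/-- A set `L` disjoint from a block `S i₀` contributes nothing: the terms for `Q` and
`insert i₀ Q` cancel. -/
lemma alternating_sum_eq_zero {ι κ : Type*} [DecidableEq ι] [DecidableEq κ] [Fintype κ]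
    (S : κ → Finset ι) (K L : Finset ι) (E : Finset ι → ℝ) (hE : E ∅ = 1) (i₀ : κ)
    (hL : L ∩ S i₀ = ∅) :
    ∑ Q ∈ (Finset.univ : Finset κ).powerset,
      (-1 : ℝ) ^ Q.card * E (L ∩ (K \ Q.biUnion S)) * ∏ i ∈ Q, E (L ∩ S i) = 0 := by
  rw [← Finset.insert_erase (Finset.mem_univ i₀),
    Finset.sum_powerset_insert (Finset.notMem_erase _ _), ← Finset.sum_add_distrib]
  refine Finset.sum_eq_zero fun Q hQ => ?_
  have hi : i₀ ∉ Q := fun h => Finset.notMem_erase _ _ (Finset.mem_powerset.1 hQ h)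
  have hset : L ∩ (K \ (insert i₀ Q).biUnion S) = L ∩ (K \ Q.biUnion S) := by
    rw [Finset.biUnion_insert]
    have hd := Finset.disjoint_left.1 (Finset.disjoint_iff_inter_eq_empty.2 hL)
    ext x
    simp only [Finset.mem_inter, Finset.mem_sdiff, Finset.mem_union]
    grind
  rw [hset, Finset.card_insert_of_notMem hi, Finset.prod_insert hi, hL, hE]
  ring

/-- Cluster identity: for a partition of `K` into nonempty blocks `S₁,…,S_j` and the
cumulant-type inversion `E` of a set function `f` (with `f ∅ = 1`), the alternating
sum `Σ_𝒬 (−1)^{|𝒬|} (∏_{i∈𝒬} f_{S_i}) f_{K∖∪_{i∈𝒬}S_i}` equals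
`Σ_L a^{K∖L} Σ_𝒬 (−1)^{|𝒬|} E_{L∩(K∖∪_{i∈𝒬}S_i)} ∏_{i∈𝒬} E_{L∩S_i}`, where the outer
sum runs over those `L ⊆ K` meeting every block. -/
theorem cluster_cumulant_identity {ι : Type*} [DecidableEq ι] (K : Finset ι)
    (j : ℕ) (hj : 1 ≤ j) (S : Fin j → Finset ι)
    (hSne : ∀ i, (S i).Nonempty)
    (hSdisj : ∀ i i', i ≠ i' → Disjoint (S i) (S i'))
    (hScover : Finset.univ.biUnion S = K)
    (a : ι → ℝ) (f : Finset ι → ℝ) (hf : f ∅ = 1)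
    (E : Finset ι → ℝ)
    (hE : ∀ M ⊆ K, E M = ∑ L ∈ M.powerset,
        (-1 : ℝ) ^ L.card * (∏ i ∈ L, a i) * f (M \ L)) :
    ∑ Q ∈ (Finset.univ : Finset (Fin j)).powerset,
        (-1 : ℝ) ^ Q.card * (∏ i ∈ Q, f (S i)) * f (K \ Q.biUnion S)
      = ∑ L ∈ K.powerset.filter (fun L => ∀ i, (L ∩ S i).Nonempty),
          (∏ i ∈ K \ L, a i) *
            ∑ Q ∈ (Finset.univ : Finset (Fin j)).powerset,
              (-1 : ℝ) ^ Q.card * E (L ∩ (K \ Q.biUnion S)) * ∏ i ∈ Q, E (L ∩ S i) := by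
  have hE0 : E ∅ = 1 := by
    rw [hE ∅ (Finset.empty_subset _)]
    simp [hf]
  have hinv : ∀ M ⊆ K, f M = ∑ L ∈ M.powerset, (∏ i ∈ M \ L, a i) * E L := fun M hM =>
    cumulant_inversion a f E M fun L hL => hE L (hL.trans hM)
  have hQK : ∀ Q : Finset (Fin j), Q.biUnion S ⊆ K := fun Q =>
    hScover ▸ Finset.biUnion_subset_biUnion_of_subset_left S (Finset.subset_univ Q)
  rw [Finset.sum_filter_of_ne]
  · simp_rw [mul_assoc, cluster_expansion S hSdisj K _ (hQK _) a f E hinv, Finset.mul_sum]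
    rw [Finset.sum_comm]
    refine Finset.sum_congr rfl fun L _ => Finset.sum_congr rfl fun Q _ => ?_
    ring
  · intro L _ hne i
    rw [Finset.nonempty_iff_ne_empty]
    intro hL
    exact hne (by rw [alternating_sum_eq_zero S K L E hE0 i hL, mul_zero])
end

section
/- Let t > 0, j ≥ 1, and let n₁,…,n_j ≥ 0 be integers with n = n₁ + ⋯ + n_j. For each i let g_i : ℝ^{n_i} → [0,∞] be measurable. Then ∏_{i=1}^{j} ∫_{t > u₁ > u₂ > ⋯ > u_{n_i} > 0} g_i(u₁,…,u_{n_i}) du₁⋯du_{n_i} = Σ_{(A₁,…,A_j)} ∫_{t > t₁ > t₂ > ⋯ > t_n > 0} ∏_{i=1}^{j} g_i(t_{a_i(1)},…,t_{a_i(n_i)}) dt₁⋯dt_n, where the sum runs over all ordered tuples (A₁,…,A_j) of pairwise disjoint sets with A₁ ∪ ⋯ ∪ A_j = {1,…,n} and |A_i| = n_i, and a_i(1) < a_i(2) < ⋯ < a_i(n_i) enumerates the elements of A_i in increasing order. (A factor with n_i = 0 is interpreted as 1.) -/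
/-!
All factors are put on one space: with `ι = Σ i, Fin (n i)` the set of all time labels, Tonelli
(`lintegral_fin_prod_eq_prod`) and currying (`measurePreserving_piCurry_symm`) turn the product of
simplex integrals into a single integral over `ι → ℝ`. Almost every `x : ι → ℝ` is injective
(`ae_injective_pi`), and then exactly one bijection `σ : ι ≃ Fin N` sorts its coordinates in
decreasing order (`existsUnique_sorting`). The coordinates of each block decrease precisely when
the restriction of `σ` to that block is strictly increasing, so the integrand is the sum over all
interleavings `e` of its restrictions to the regions sorted by `e` (`prod_simplex_eq_sum`).
On each region, relabelling the coordinates along `e` preserves Lebesgue measure and gives the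
time-ordered integral over `Fin N → ℝ` (`lintegral_interleaving`).
-/

open MeasureTheory
open scoped ENNReal Classical

/-- Tonelli's theorem for a product of functions of separate variables; the variables may live in
different spaces. -/
lemma lintegral_fin_prod_eq_prod {j : ℕ} {E : Fin j → Type} [∀ i, MeasureSpace (E i)]
    [∀ i, SigmaFinite (volume : Measure (E i))] (f : (i : Fin j) → E i → ℝ≥0∞)
    (hf : ∀ i, Measurable (f i)) :
    ∫⁻ x : (i : Fin j) → E i, ∏ i, f i (x i) = ∏ i, ∫⁻ y, f i y := by
  induction j with
  | zero => simp [volume_pi]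
  | succ j ih =>
    have hmp := (volume_preserving_piFinSuccAbove E 0).symm
    rw [← hmp.lintegral_comp_emb (MeasurableEquiv.measurableEmbedding _),
      Fin.prod_univ_succ, ← ih (fun i => f i.succ) (fun i => hf _), Measure.volume_eq_prod,
      ← lintegral_prod_mul (hf 0).aemeasurable
        (Finset.measurable_fun_prod _ fun i _ =>
          (hf i.succ).comp (measurable_pi_apply i)).aemeasurable]
    refine lintegral_congr fun y => ?_
    rw [Fin.prod_univ_succ]
    rfl

lemma measurePreserving_piCurry_symm {j : ℕ} (n : Fin j → ℕ) :
    MeasurePreserving (MeasurableEquiv.piCurry (fun (i : Fin j) (_ : Fin (n i)) => ℝ)).symm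
      volume volume where
  measurable := MeasurableEquiv.measurable _
  map_eq := by
    refine (Measure.pi_eq fun s _ => ?_).symm
    rw [MeasurableEquiv.map_apply]
    have : (MeasurableEquiv.piCurry (fun (i : Fin j) (_ : Fin (n i)) => ℝ)).symm ⁻¹'
        (Set.univ.pi s) = Set.univ.pi fun i => Set.univ.pi fun l => s ⟨i, l⟩ := by
      ext x
      simp only [Set.mem_preimage, Set.mem_pi, Set.mem_univ, true_implies]
      exact ⟨fun h i l => h ⟨i, l⟩, fun h p => h p.1 p.2⟩
    rw [this, volume_pi_pi, Fintype.prod_sigma]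
    exact Finset.prod_congr rfl fun i _ => volume_pi_pi _

lemma ae_injective_pi {ι : Type} [Fintype ι] :
    ∀ᵐ x : ι → ℝ, Function.Injective x := by
  have key : ∀ a b : ι, a ≠ b → ∀ᵐ x : ι → ℝ, x a ≠ x b := by
    intro a b hab
    -- The diagonal `x a = x b` is a proper linear subspace, hence a null set.
    let S : Submodule ℝ (ι → ℝ) := LinearMap.ker
      ((LinearMap.proj a : (ι → ℝ) →ₗ[ℝ] ℝ) - LinearMap.proj b)
    have hS : S ≠ ⊤ := by
      intro h
      have : (Pi.single a 1 : ι → ℝ) ∈ S := by rw [h]; trivial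
      simp [S, hab.symm] at this
    have := Measure.addHaar_submodule (volume : Measure (ι → ℝ)) S hS
    rw [ae_iff]
    convert this using 2
    ext x
    simp [S, sub_eq_zero]
  have : ∀ᵐ x : ι → ℝ, ∀ a b : ι, a ≠ b → x a ≠ x b := by
    rw [ae_all_iff]; intro a
    rw [ae_all_iff]; intro b
    by_cases hab : a = b
    · simp [hab]
    · filter_upwards [key a b hab] with x hx _ using hx
  filter_upwards [this] with x hx a b h
  by_contra hab
  exact hx a b hab h

lemma existsUnique_sorting {ι : Type} [Fintype ι] {N : ℕ} (hN : Fintype.card ι = N)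
    {x : ι → ℝ} (hx : Function.Injective x) :
    ∃! σ : ι ≃ Fin N, ∀ p q, σ p < σ q ↔ x q < x p := by
  -- Labels are ordered by decreasing coordinate; `σ` is then the order isomorphism with `Fin N`.
  let _ : LinearOrder ι := LinearOrder.lift' (fun p => OrderDual.toDual (x p)) (fun a b h => hx h)
  have hlt : ∀ p q : ι, p < q ↔ x q < x p := fun p q => Iff.rfl
  let φ : Fin N ≃o ι := Fintype.orderIsoFinOfCardEq ι hN
  refine ⟨φ.symm.toEquiv, fun p q => ?_, fun τ hτ => ?_⟩
  · rw [← hlt]; exact φ.symm.lt_iff_lt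
  · let ψ : ι ≃o Fin N := τ.toOrderIso
      (fun p q h => by
        rcases h.lt_or_eq with h | h
        · exact ((hτ p q).2 h).le
        · rw [h])
      (fun p q h => by
        by_contra hc
        have := (hτ _ _).2 ((hlt _ _).1 (not_le.1 hc))
        simp only [Equiv.apply_symm_apply] at this
        exact absurd h (not_le.2 this))
    have : ψ = φ.symm := by
      have : ψ.symm = φ := Subsingleton.elim _ _
      rw [← this]; rfl
    ext p
    rw [← this]; rfl

/-- A family of strictly increasing maps `e i : Fin (n i) → Fin N` with pairwise disjoint ranges
covering `Fin N`, i.e. an ordered partition of `Fin N` into blocks of sizes `n i`, each enumerated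
increasingly. -/
def IsInterleaving {j N : ℕ} {n : Fin j → ℕ} (e : (i : Fin j) → Fin (n i) → Fin N) : Prop :=
  (∀ i, StrictMono (e i)) ∧ (∀ i i', i ≠ i' → ∀ l l', e i l ≠ e i' l') ∧
    (∀ m : Fin N, ∃ i l, e i l = m)

lemma IsInterleaving.bijective {j N : ℕ} {n : Fin j → ℕ} {e : (i : Fin j) → Fin (n i) → Fin N}
    (h : IsInterleaving e) : Function.Bijective (fun p : Σ i, Fin (n i) => e p.1 p.2) := by
  refine ⟨?_, fun m => ?_⟩
  · rintro ⟨i, l⟩ ⟨i', l'⟩ hp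
    by_cases hi : i = i'
    · subst hi
      exact congrArg (Sigma.mk i) ((h.1 i).injective hp)
    · exact absurd hp (h.2.1 i i' hi l l')
  · obtain ⟨i, l, hl⟩ := h.2.2 m
    exact ⟨⟨i, l⟩, hl⟩

/-- The region of `x` in the cube `(0, t)^ι` whose coordinates, listed in the order given by `e`,
strictly decrease. -/
def SortedBy {j N : ℕ} {n : Fin j → ℕ} (t : ℝ) (e : (i : Fin j) → Fin (n i) → Fin N)
    (x : (Σ i, Fin (n i)) → ℝ) : Prop :=
  (∀ p q : Σ i, Fin (n i), e p.1 p.2 < e q.1 q.2 → x q < x p) ∧ ∀ p, 0 < x p ∧ x p < t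

lemma lintegral_interleaving {j N : ℕ} {n : Fin j → ℕ} (t : ℝ)
    (g : (i : Fin j) → (Fin (n i) → ℝ) → ℝ≥0∞)
    {e : (i : Fin j) → Fin (n i) → Fin N} (he : IsInterleaving e) :
    ∫⁻ u : Fin N → ℝ, (if StrictAnti u ∧ ∀ m, 0 < u m ∧ u m < t then
        ∏ i, g i (fun l => u (e i l)) else 0) =
      ∫⁻ x : (Σ i, Fin (n i)) → ℝ,
        if SortedBy t e x then ∏ i, g i (fun l => x ⟨i, l⟩) else 0 := by
  let σ : (Σ i, Fin (n i)) ≃ Fin N := Equiv.ofBijective _ he.bijective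
  have hmp := volume_measurePreserving_piCongrLeft (fun _ : Fin N => ℝ) σ
  rw [← hmp.lintegral_comp_emb (MeasurableEquiv.measurableEmbedding _)]
  refine lintegral_congr fun x => ?_
  set u := MeasurableEquiv.piCongrLeft (fun _ : Fin N => ℝ) σ x with hu
  have hux : ∀ p : Σ i, Fin (n i), u (e p.1 p.2) = x p := fun p =>
    MeasurableEquiv.piCongrLeft_apply_apply (β := fun _ => ℝ) σ x p
  have hiff : (StrictAnti u ∧ ∀ m, 0 < u m ∧ u m < t) ↔ SortedBy t e x := by
    constructor
    · rintro ⟨h1, h2⟩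
      refine ⟨fun p q hpq => ?_, fun p => ?_⟩
      · rw [← hux, ← hux]; exact h1 hpq
      · rw [← hux]; exact h2 _
    · rintro ⟨h1, h2⟩
      refine ⟨fun a b hab => ?_, fun m => ?_⟩
      · obtain ⟨p, rfl⟩ := he.bijective.2 a
        obtain ⟨q, rfl⟩ := he.bijective.2 b
        simp only [hux]
        exact h1 p q hab
      · obtain ⟨p, rfl⟩ := he.bijective.2 m
        simp only [hux]
        exact h2 p
  have hg : ∀ i, (fun l => u (e i l)) = fun l => x ⟨i, l⟩ := fun i => funext fun l => hux ⟨i, l⟩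
  simp only [hiff, hg]

/-- Up to ties between coordinates, the product of simplices is the disjoint union, over all
interleavings `e`, of the regions sorted by `e`. -/
lemma prod_simplex_eq_sum {j N : ℕ} {n : Fin j → ℕ} (t : ℝ) (hN : N = ∑ i, n i)
    (g : (i : Fin j) → (Fin (n i) → ℝ) → ℝ≥0∞) {x : (Σ i, Fin (n i)) → ℝ}
    (hx : Function.Injective x) :
    (∏ i, if StrictAnti (fun l => x ⟨i, l⟩) ∧ ∀ l, 0 < x ⟨i, l⟩ ∧ x ⟨i, l⟩ < t then
        g i (fun l => x ⟨i, l⟩) else 0) =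
      ∑ e : (i : Fin j) → Fin (n i) → Fin N, if IsInterleaving e then
        (if SortedBy t e x then ∏ i, g i (fun l => x ⟨i, l⟩) else 0) else 0 := by
  by_cases hA : ∀ i, StrictAnti (fun l => x ⟨i, l⟩) ∧ ∀ l, 0 < x ⟨i, l⟩ ∧ x ⟨i, l⟩ < t
  · obtain ⟨σ, hσ, huniq⟩ := existsUnique_sorting (N := N) (by simp [hN]) hx
    have hint : IsInterleaving (fun i l => σ ⟨i, l⟩) := by
      refine ⟨fun i l l' hl => (hσ _ _).2 ((hA i).1 hl), fun i i' hi l l' h => ?_, fun m => ?_⟩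
      · exact hi (congrArg Sigma.fst (σ.injective h))
      · exact ⟨(σ.symm m).1, (σ.symm m).2, σ.apply_symm_apply m⟩
    have hsort : SortedBy t (fun i l => σ ⟨i, l⟩) x :=
      ⟨fun p q h => (hσ p q).1 h, fun p => (hA p.1).2 p.2⟩
    rw [Finset.sum_eq_single (fun i l => σ ⟨i, l⟩), if_pos hint, if_pos hsort]
    · exact Finset.prod_congr rfl fun i _ => if_pos (hA i)
    · intro e _ hne
      by_cases he : IsInterleaving e
      · rw [if_pos he, if_neg]
        intro hs
        apply hne
        have := huniq (Equiv.ofBijective _ he.bijective) (fun p q => ⟨hs.1 p q, fun hqp => by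
          rcases lt_trichotomy (e p.1 p.2) (e q.1 q.2) with h | h | h
          · exact h
          · rw [he.bijective.1 h] at hqp
            exact absurd hqp (lt_irrefl _)
          · exact absurd (hs.1 _ _ h) hqp.not_gt⟩)
        funext i l
        rw [← this]; rfl
      · rw [if_neg he]
    · simp
  · rw [Finset.sum_eq_zero]
    · obtain ⟨i, hi⟩ := not_forall.1 hA
      exact Finset.prod_eq_zero (Finset.mem_univ i) (if_neg hi)
    · intro e _
      by_cases he : IsInterleaving e
      · rw [if_pos he, if_neg]
        exact fun hs => hA fun i =>
          ⟨fun l l' hl => hs.1 ⟨i, l⟩ ⟨i, l'⟩ (he.1 i hl), fun l => hs.2 ⟨i, l⟩⟩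
      · rw [if_neg he]

lemma measurableSet_simplex (t : ℝ) (m : ℕ) :
    MeasurableSet {u : Fin m → ℝ | StrictAnti u ∧ ∀ l, 0 < u l ∧ u l < t} := by
  simp only [StrictAnti]
  measurability

lemma measurableSet_sortedBy {j N : ℕ} {n : Fin j → ℕ} (t : ℝ)
    (e : (i : Fin j) → Fin (n i) → Fin N) : MeasurableSet {x | SortedBy t e x} := by
  simp only [SortedBy]
  measurability

/-- The product of time-ordered simplex integrals of `g₁,…,g_j` equals the sum, over
all ways of interleaving the `n₁,…,n_j` times into one decreasing chain
`t > t₁ > ⋯ > t_n > 0` (encoded by tuples of strictly monotone maps with pairwise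
disjoint ranges covering `{1,…,n}`), of the time-ordered integral of the product. -/
theorem timeordered_product_factorization
    (t : ℝ) (ht : 0 < t) (j : ℕ) (hj : 1 ≤ j) (n : Fin j → ℕ)
    (N : ℕ) (hN : N = ∑ i, n i)
    (g : (i : Fin j) → (Fin (n i) → ℝ) → ℝ≥0∞)
    (hg : ∀ i, Measurable (g i)) :
    (∏ i, ∫⁻ u : Fin (n i) → ℝ,
        (if StrictAnti u ∧ ∀ l, 0 < u l ∧ u l < t then g i u else 0))
      = ∑ e : (i : Fin j) → Fin (n i) → Fin N,
          (if (∀ i, StrictMono (e i)) ∧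
              (∀ i i', i ≠ i' → ∀ l l', e i l ≠ e i' l') ∧
              (∀ m : Fin N, ∃ i l, e i l = m) then
            ∫⁻ u : Fin N → ℝ,
              (if StrictAnti u ∧ ∀ m, 0 < u m ∧ u m < t then
                ∏ i, g i (fun l => u (e i l)) else 0)
          else 0) := by
  have hF : ∀ i, Measurable fun u : Fin (n i) → ℝ =>
      if StrictAnti u ∧ ∀ l, 0 < u l ∧ u l < t then g i u else 0 := fun i =>
    Measurable.ite (measurableSet_simplex t (n i)) (hg i) measurable_const
  have hG : Measurable fun x : (Σ i, Fin (n i)) → ℝ => ∏ i, g i (fun l => x ⟨i, l⟩) :=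
    Finset.measurable_fun_prod _ fun i _ => (hg i).comp (by fun_prop)
  rw [← lintegral_fin_prod_eq_prod _ hF,
    ← (measurePreserving_piCurry_symm n).symm.lintegral_comp_emb
      (MeasurableEquiv.measurableEmbedding _)]
  calc _ = ∫⁻ x : (Σ i, Fin (n i)) → ℝ,
        ∑ e : (i : Fin j) → Fin (n i) → Fin N, if IsInterleaving e then
          (if SortedBy t e x then ∏ i, g i (fun l => x ⟨i, l⟩) else 0) else 0 := by
        refine lintegral_congr_ae ?_
        filter_upwards [ae_injective_pi] with x hx
        exact prod_simplex_eq_sum t hN g hx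
    _ = ∑ e : (i : Fin j) → Fin (n i) → Fin N, ∫⁻ x : (Σ i, Fin (n i)) → ℝ,
        if IsInterleaving e then
          (if SortedBy t e x then ∏ i, g i (fun l => x ⟨i, l⟩) else 0) else 0 := by
        refine lintegral_finsetSum _ fun e _ => ?_
        by_cases he : IsInterleaving e
        · simp only [if_pos he]
          exact Measurable.ite (measurableSet_sortedBy t e) hG measurable_const
        · simp only [if_neg he]
          exact measurable_const
    _ = _ := by
        refine Finset.sum_congr rfl fun e _ => ?_
        by_cases he : IsInterleaving e
        · simp only [if_pos he]
          rw [if_pos (show _ ∧ _ ∧ _ from he), lintegral_interleaving t g he]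
        · simp only [if_neg he]
          rw [if_neg (show ¬ (_ ∧ _ ∧ _) from he), lintegral_zero]
end
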